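/- Let a be the harmonic potential of the simple random walk on ℤ² ⊂ ℂ. Then for every integer m ≥ 0, a(m + i·m) = (4/π)·∑_{j=1}^{m} 1/(2j − 1) = (4/π)·(1 + 1/3 + 1/5 + ⋯ + 1/(2m−1)) (with the empty sum equal to 0 for m = 0). -/

import Mathlib

open scoped BigOperators Classical

noncomputable section

/-- `srwP n z` is the probability that the simple random walk on `ℤ² = ℤ + iℤ ⊂ ℂ`
(i.i.d. steps uniform on `{1, -1, i, -i}`), started at `0`, is at `z` after `n` steps. -/
def srwP : ℕ → ℂ → ℝ
  | 0 => fun z => if z = 0 then 1 else 0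
  | n + 1 => fun z =>
      (srwP n (z - 1) + srwP n (z + 1) + srwP n (z - Complex.I) + srwP n (z + Complex.I)) / 4

/-- The harmonic potential `a(z) = ∑ₙ (Pₙ(0) - Pₙ(z))` of the simple random walk on
`ℤ² ⊂ ℂ`. -/
def srwPot (z : ℂ) : ℝ :=
  ∑' n : ℕ, (srwP n 0 - srwP n z)

/-- Membership in the lattice `ℤ² = ℤ + iℤ ⊂ ℂ` of Gaussian integers. -/
def IsGaussianInt (z : ℂ) : Prop :=
  ∃ a b : ℤ, z = (a : ℂ) + (b : ℂ) * Complex.I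

/-- One-dimensional simple random walk probabilities. -/
def q1 : ℕ → ℤ → ℝ
  | 0 => fun z => if z = 0 then 1 else 0
  | n + 1 => fun z => (q1 n (z - 1) + q1 n (z + 1)) / 2

lemma srwP_eq (n : ℕ) : ∀ x y : ℤ,
    srwP n ((x : ℂ) + (y : ℂ) * Complex.I) = q1 n (x + y) * q1 n (x - y) := by
  induction n with
  | zero =>
    intro x y
    have h : ((x : ℂ) + (y : ℂ) * Complex.I = 0) ↔ (x = 0 ∧ y = 0) := by
      rw [Complex.ext_iff]
      simp
    simp only [srwP, q1, h]
    by_cases h1 : x + y = 0 <;> by_cases h2 : x - y = 0 <;> simp [h1, h2] <;> omega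
  | succ n ih =>
    intro x y
    have e1 : (x : ℂ) + (y : ℂ) * Complex.I - 1 = ((x - 1 : ℤ) : ℂ) + (y : ℂ) * Complex.I := by
      push_cast; ring
    have e2 : (x : ℂ) + (y : ℂ) * Complex.I + 1 = ((x + 1 : ℤ) : ℂ) + (y : ℂ) * Complex.I := by
      push_cast; ring
    have e3 : (x : ℂ) + (y : ℂ) * Complex.I - Complex.I
        = (x : ℂ) + ((y - 1 : ℤ) : ℂ) * Complex.I := by
      push_cast; ring
    have e4 : (x : ℂ) + (y : ℂ) * Complex.I + Complex.I
        = (x : ℂ) + ((y + 1 : ℤ) : ℂ) * Complex.I := by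
      push_cast; ring
    simp only [srwP, q1]
    rw [e1, e2, e3, e4, ih, ih, ih, ih]
    rw [show x - 1 + y = x + y - 1 by ring, show x - 1 - y = x - y - 1 by ring,
      show x + 1 + y = x + y + 1 by ring, show x + 1 - y = x - y + 1 by ring,
      show x + (y - 1) = x + y - 1 by ring, show x - (y - 1) = x - y + 1 by ring,
      show x + (y + 1) = x + y + 1 by ring, show x - (y + 1) = x - y - 1 by ring]
    ring

lemma q1_support (n : ℕ) : ∀ z : ℤ, z < -n → q1 n z = 0 := by
  induction n with
  | zero => intro z hz; simp only [q1]; rw [if_neg]; omega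
  | succ n ih =>
    intro z hz
    push_cast at hz
    simp only [q1]
    rw [ih _ (by omega), ih _ (by omega)]; simp

lemma q1_parity (n : ℕ) : ∀ z : ℤ, (n + z) % 2 = 1 → q1 n z = 0 := by
  induction n with
  | zero => intro z hz; simp only [q1]; rw [if_neg]; omega
  | succ n ih =>
    intro z hz
    push_cast at hz
    simp only [q1]
    rw [ih _ (by omega), ih _ (by omega)]; simp

lemma q1_choose (n : ℕ) : ∀ j : ℕ, q1 n (2 * j - n) = (n.choose j : ℝ) / 2 ^ n := by
  induction n with
  | zero =>
    intro j
    cases j with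
    | zero => simp [q1]
    | succ j =>
      simp only [q1]
      rw [if_neg (by push_cast; omega)]
      simp
  | succ n ih =>
    intro j
    simp only [q1]
    cases j with
    | zero =>
      rw [q1_support n _ (by push_cast; omega)]
      have := ih 0
      rw [show (2 * ((0 : ℕ) : ℤ) - ((n + 1 : ℕ) : ℤ) + 1) = 2 * ((0 : ℕ) : ℤ) - n by
        push_cast; ring, this]
      simp [pow_succ]; ring
    | succ j =>
      rw [show (2 * ((j + 1 : ℕ) : ℤ) - ((n + 1 : ℕ) : ℤ) + 1) = 2 * ((j + 1 : ℕ) : ℤ) - n by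
        push_cast; ring,
        show (2 * ((j + 1 : ℕ) : ℤ) - ((n + 1 : ℕ) : ℤ) - 1) = 2 * (j : ℤ) - n by
        push_cast; ring, ih, ih, Nat.choose_succ_succ]
      push_cast
      rw [pow_succ]; ring

/-- `ee k m` is the probability that the one-dimensional walk is at `2m` at time `2k`. -/
def ee (k m : ℕ) : ℝ := ((2 * k).choose (k + m) : ℝ) / 4 ^ k

lemma q1_even (k m : ℕ) : q1 (2 * k) (2 * m) = ee k m := by
  have := q1_choose (2 * k) (k + m)
  rw [show (2 * ((k + m : ℕ) : ℤ) - ((2 * k : ℕ) : ℤ)) = 2 * m by push_cast; ring] at this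
  rw [this, ee, pow_mul]; norm_num

lemma srwP_even (k m : ℕ) : srwP (2 * k) ((m : ℂ) + (m : ℂ) * Complex.I) = ee k m * ee k 0 := by
  have := srwP_eq (2 * k) m m
  push_cast at this
  rw [this, ← q1_even, ← q1_even, show (m : ℤ) + m = 2 * m by ring, sub_self]
  simp

lemma srwP_odd (k m : ℕ) : srwP (2 * k + 1) ((m : ℂ) + (m : ℂ) * Complex.I) = 0 := by
  have := srwP_eq (2 * k + 1) m m
  push_cast at this
  rw [this, sub_self, q1_parity (2 * k + 1) 0 (by push_cast; omega), mul_zero]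

lemma ee_right (k m : ℕ) : ee k (m + 1) * (k + m + 1) = ee k m * (k - m) := by
  have h : ((2 * k).choose (k + m + 1) : ℝ) * (k + m + 1) = (2 * k).choose (k + m) * (k - m) := by
    have := Nat.choose_succ_right_eq (2 * k) (k + m)
    rcases le_or_gt m k with hm | hm
    · rw [show 2 * k - (k + m) = k - m by omega] at this
      have h2 := congrArg (fun n : ℕ => (n : ℝ)) this
      push_cast [Nat.cast_sub hm] at h2
      exact h2
    · rw [Nat.choose_eq_zero_of_lt (show 2 * k < k + m + 1 by omega),
        Nat.choose_eq_zero_of_lt (show 2 * k < k + m by omega)]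
      simp
  unfold ee
  rw [← add_assoc, div_mul_eq_mul_div, h, div_mul_eq_mul_div]

lemma ee_up (k m : ℕ) : ee (k + 1) m * ((k + 1 + m) * (k + 1 - m) * 4)
    = ee k m * ((2 * k + 1) * (2 * k + 2)) := by
  have h1 : (2 * k + 2 : ℝ) * ((2 * k + 1).choose (k + m) : ℝ)
      = (2 * (k + 1)).choose (k + 1 + m) * (k + 1 + m) := by
    have := Nat.add_one_mul_choose_eq (2 * k + 1) (k + m)
    have h2 := congrArg (fun n : ℕ => (n : ℝ)) this
    rw [show 2 * (k + 1) = 2 * k + 1 + 1 by ring, show k + 1 + m = k + m + 1 by ring]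
    push_cast at h2
    linarith
  have h2 : ((2 * k).choose (k + m) : ℝ) * (2 * k + 1)
      = (2 * k + 1).choose (k + m) * (k + 1 - m) := by
    have := Nat.choose_mul_succ_eq (2 * k) (k + m)
    rcases le_or_gt m (k + 1) with hm | hm
    · rw [show 2 * k + 1 - (k + m) = k + 1 - m by omega] at this
      have h2 := congrArg (fun n : ℕ => (n : ℝ)) this
      push_cast [Nat.cast_sub hm] at h2
      exact h2
    · rw [Nat.choose_eq_zero_of_lt (show 2 * k < k + m by omega),
        Nat.choose_eq_zero_of_lt (show 2 * k + 1 < k + m by omega)]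
      simp
  unfold ee
  rw [pow_succ]
  have h4 : (4 : ℝ) ^ k ≠ 0 := by positivity
  field_simp
  linear_combination (-(k + 1 - m : ℝ)) * h1 - (2 * k + 2 : ℝ) * h2

lemma ee_zero_up (k : ℕ) : ee (k + 1) 0 = ee k 0 * ((2 * k + 1) / (2 * k + 2)) := by
  have := ee_up k 0
  push_cast at this
  have h : (k + 1 : ℝ) ≠ 0 := by positivity
  have h' : (2 * k + 2 : ℝ) ≠ 0 := by positivity
  field_simp
  apply mul_right_cancel₀ h'
  linear_combination this

lemma ee_nonneg (k m : ℕ) : 0 ≤ ee k m := by unfold ee; positivity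

lemma tt_eq (k m : ℕ) : ee k 0 * (ee k m - ee k (m + 1))
    = ee k 0 * ee k m * (2 * m + 1) / (k + m + 1) := by
  have := ee_right k m
  have h : (k + m + 1 : ℝ) ≠ 0 := by positivity
  field_simp
  linear_combination (-ee k 0) * this

lemma tt_nonneg (k m : ℕ) : 0 ≤ ee k 0 * (ee k m - ee k (m + 1)) := by
  rw [tt_eq]
  have := ee_nonneg k 0
  have := ee_nonneg k m
  positivity

lemma tt_sum (m N : ℕ) : (2 * m + 1) * ∑ k ∈ Finset.range N, ee k 0 * (ee k m - ee k (m + 1))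
    = 4 * (N - m) * (ee N 0 * ee N m) := by
  induction N with
  | zero =>
    cases m with
    | zero => simp
    | succ m => simp [ee]
  | succ k ih =>
    rw [Finset.sum_range_succ, mul_add, ih, tt_eq, ee_zero_up]
    have := ee_up k m
    have h : (k + m + 1 : ℝ) ≠ 0 := by positivity
    have h' : (2 * k + 2 : ℝ) ≠ 0 := by positivity
    push_cast
    have h3 : 4 * ((k : ℝ) + 1 - m) * ee (k + 1) m
        = ee k m * ((2 * k + 1) * (2 * k + 2)) / (k + m + 1) := by
      rw [eq_div_iff h]
      linear_combination this
    calc _ = (ee k 0 * ee k m) * (4 * (k - m) + (2 * m + 1) ^ 2 / (k + m + 1)) := by ring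
      _ = (ee k 0 * ee k m) * ((2 * k + 1) ^ 2 / (k + m + 1)) := by
        congr 1
        field_simp
        ring
      _ = ee k 0 * ((2 * k + 1) / (2 * k + 2))
          * (ee k m * ((2 * k + 1) * (2 * k + 2)) / (k + m + 1)) := by
        field_simp
      _ = _ := by rw [← h3]; ring

open Filter Topology

lemma wallis_ee (N : ℕ) : Real.Wallis.W N * ((2 * N + 1) * ee N 0 ^ 2) = 1 := by
  induction N with
  | zero => simp [ee, Real.Wallis.W]
  | succ k ih =>
    rw [Real.Wallis.W_succ, ee_zero_up]
    refine Eq.trans ?_ ih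
    have h1 : (2 * k + 1 : ℝ) ≠ 0 := by positivity
    have h2 : (2 * k + 2 : ℝ) ≠ 0 := by positivity
    have h3 : (2 * k + 3 : ℝ) ≠ 0 := by positivity
    push_cast
    rw [show (2 * ((k : ℝ) + 1) + 1) = 2 * k + 3 by ring]
    field_simp

lemma lim_sq : Tendsto (fun N : ℕ => (2 * (N : ℝ) + 1) * ee N 0 ^ 2) atTop (𝓝 (2 / Real.pi)) := by
  have h := Real.Wallis.tendsto_W_nhds_pi_div_two.inv₀ (by positivity)
  rw [inv_div] at h
  refine h.congr fun N => ?_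
  exact inv_eq_of_mul_eq_one_right (wallis_ee N)

lemma lim_ratio (a b c : ℝ) (hc : c ≠ 0) (d : ℝ) :
    Tendsto (fun N : ℕ => (a * (N : ℝ) + b) / (c * N + d)) atTop (𝓝 (a / c)) := by
  have h0 := tendsto_inv_atTop_nhds_zero_nat (𝕜 := ℝ)
  have h1 : Tendsto (fun N : ℕ => (a + b * (N : ℝ)⁻¹) / (c + d * (N : ℝ)⁻¹)) atTop
      (𝓝 ((a + b * 0) / (c + d * 0))) :=
    ((h0.const_mul b).const_add a).div ((h0.const_mul d).const_add c) (by simpa using hc)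
  simp only [mul_zero, add_zero] at h1
  refine h1.congr' ?_
  filter_upwards [eventually_gt_atTop 0] with N hN
  have : (N : ℝ) ≠ 0 := by positivity
  rw [← mul_div_mul_right _ _ this]
  congr 1 <;> field_simp

lemma lim_mixed (m : ℕ) :
    Tendsto (fun N : ℕ => (2 * (N : ℝ) + 1) * (ee N 0 * ee N m)) atTop (𝓝 (2 / Real.pi)) := by
  induction m with
  | zero => simpa [pow_two] using lim_sq
  | succ m ih =>
    have := ih.mul (lim_ratio 1 (-m) 1 one_ne_zero (m + 1))
    simp only [div_one, mul_one] at this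
    refine this.congr fun N => ?_
    have h := ee_right N m
    have h0 : (1 * (N : ℝ) + (m + 1)) ≠ 0 := by positivity
    rw [← mul_div_assoc, div_eq_iff h0]
    linear_combination (-(2 * (N : ℝ) + 1) * ee N 0) * h

lemma tt_hasSum (m : ℕ) : HasSum (fun k => ee k 0 * (ee k m - ee k (m + 1)))
    (4 / Real.pi * (1 / (2 * (m : ℝ) + 1))) := by
  rw [hasSum_iff_tendsto_nat_of_nonneg (fun k => tt_nonneg k m)]
  have hm : (2 * (m : ℝ) + 1) ≠ 0 := by positivity
  have := ((lim_mixed m).mul (lim_ratio 4 (-4 * m) 2 two_ne_zero 1)).mul_const (1 / (2 * (m : ℝ) + 1))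
  rw [show 2 / Real.pi * (4 / 2) = 4 / Real.pi by ring] at this
  refine this.congr fun N => ?_
  have h := tt_sum m N
  have h0 : (2 * (N : ℝ) + 1) ≠ 0 := by positivity
  rw [mul_one_div, div_eq_iff hm, mul_comm _ (2 * (m : ℝ) + 1), h]
  field_simp
  ring

lemma even_hasSum (m : ℕ) : HasSum (fun k => ee k 0 * (ee k 0 - ee k m))
    (4 / Real.pi * ∑ j ∈ Finset.range m, 1 / (2 * (j : ℝ) + 1)) := by
  induction m with
  | zero => simp
  | succ m ih =>
    rw [Finset.sum_range_succ, mul_add]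
    refine (ih.add (tt_hasSum m)).congr_fun ?_
    intro k
    ring

/-- **The potential on the diagonal** (formula (7)).  For the simple random walk on
`ℤ² ⊂ ℂ`, `a(m + im) = (4/π)·(1 + 1/3 + 1/5 + ⋯ + 1/(2m-1))` for every `m ≥ 0`. -/
theorem srwPot_diagonal (m : ℕ) :
    srwPot ((m : ℂ) + (m : ℂ) * Complex.I) =
      4 / Real.pi * ∑ j ∈ Finset.range m, 1 / (2 * (j : ℝ) + 1) := by
  have h : HasSum (fun n => srwP n 0 - srwP n ((m : ℂ) + (m : ℂ) * Complex.I))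
      (4 / Real.pi * ∑ j ∈ Finset.range m, 1 / (2 * (j : ℝ) + 1) + 0) := by
    have e0 : (0 : ℂ) = ((0 : ℕ) : ℂ) + ((0 : ℕ) : ℂ) * Complex.I := by simp
    refine HasSum.even_add_odd ?_ ?_
    · convert even_hasSum m using 2 with k
      rw [srwP_even]
      conv_lhs => rw [e0, srwP_even]
      ring
    · convert (hasSum_zero (α := ℝ) (β := ℕ)) using 2 with k
      rw [srwP_odd]
      conv_lhs => rw [e0, srwP_odd]
      simp
  rw [add_zero] at h
  exact h.tsum_eq
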